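/- arXiv:2409.04506 — 2 statements merged into one kernel-verified Lean document; each statement's English description precedes it below -/
import Mathlib

section
/- Suppose the convex conjugate V of the utility function U satisfies EAE(V) < ∞. If u(x, U) < ∞ for some x > 0, then u(x', U_c) < ∞ for every x' ∈ (0, x), where U_c is the concave envelope of U. -/
/-! Since `EAE(V) < ∞`, one has `U_c ≤ K·U` for all large arguments, and this is what transfers
finiteness from `U` to `U_c`.

For small `y > 0` the supremum defining `V(y)` is attained at some `a > 0`, and `-a ∈ ∂V(y)`, so
`a y ≤ M V(y)` with a constant `M` independent of `y` (`exists_maximizers`). Let `y n` decrease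
geometrically to `0` with ratio close to `1` (depending on `M`), with maximizers `a n`. For
`z ≥ a 0` there are two cases. If all `a n ≤ z`, then `V(y n) ≤ U(z)` and
`U_c(z) ≤ V(y n) + z y n` gives `U_c(z) ≤ U(z)` in the limit. Otherwise `z` lies between two
consecutive maximizers, `a n ≤ z < a (n+1)`. Then `V(y n) ≤ U(z)`, the elasticity bound gives
`V(y (n+1)) ≤ 2 V(y n)`, and
`U_c(z) ≤ V(y (n+1)) + z y (n+1) ≤ (1+M) V(y (n+1)) ≤ 2 (1+M) U(z)`.
For `z ≤ a 0` the envelope is bounded above. See `envelope_bound`.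

Finally, if `f ∈ C(x')` then `g = f + (x - x') ∈ C(x)`, and `U(g) ≥ U(x - x')` is bounded below,
so `E[U(g)⁺]` is bounded in terms of `u(x, U)`; hence so is `E[U_c(f)⁺]`. -/

open MeasureTheory Filter Set Topology ENNReal

noncomputable section

/-- The utility function extended to all of `ℝ`, with value `−∞` on `(−∞,0)` and
`U(0) := lim_{x ↓ 0} U(x)` (here, by monotonicity, the infimum over `(0,∞)`). -/
def Uext (U : ℝ → ℝ) : ℝ → EReal := fun x =>
  if 0 < x then (U x : EReal)
  else if x = 0 then ⨅ z : {z : ℝ // 0 < z}, ((U z.1 : ℝ) : EReal)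
  else ⊥

/-- A (possibly non-concave) utility function. -/
structure IsUtility (U : ℝ → ℝ) : Prop where
  mono : ∀ ⦃x y : ℝ⦄, 0 < x → x ≤ y → U x ≤ U y
  nonconst : ∃ x y : ℝ, 0 < x ∧ 0 < y ∧ U x ≠ U y
  usc : UpperSemicontinuousOn U (Set.Ioi 0)
  growth : Filter.Tendsto (fun x => U x / x) Filter.atTop (nhds 0)
  pos_limit : ∃ x : ℝ, 0 < x ∧ 0 < U x

/-- Concavity for `EReal`-valued functions on `ℝ`. -/
def ERealConcave (g : ℝ → EReal) : Prop :=
  ∀ x y : ℝ, ∀ t : ℝ, 0 ≤ t → t ≤ 1 →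
    ((t : ℝ) : EReal) * g x + (((1 - t) : ℝ) : EReal) * g y ≤ g (t * x + (1 - t) * y)

/-- `Uc` is the concave envelope of the utility `U`: the smallest concave function
dominating (the extension of) `U`. -/
def IsConcaveEnvelope (U : ℝ → ℝ) (Uc : ℝ → EReal) : Prop :=
  ERealConcave Uc ∧ (∀ x : ℝ, Uext U x ≤ Uc x) ∧
    ∀ g : ℝ → EReal, ERealConcave g → (∀ x : ℝ, Uext U x ≤ g x) → ∀ x : ℝ, Uc x ≤ g x

/-- The convex conjugate `V(y) = sup_{x > 0} (U(x) − x y)`. -/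
def conj (U : ℝ → ℝ) (y : ℝ) : ℝ :=
  sSup ((fun x => U x - x * y) '' Set.Ioi (0 : ℝ))

/-- The subdifferential of a convex function `V` (viewed on `(0,∞)`). -/
def subdiff (V : ℝ → ℝ) (y : ℝ) : Set ℝ :=
  {q : ℝ | ∀ z : ℝ, 0 < z → V y + q * (z - y) ≤ V z}

/-- The extended asymptotic elasticity `EAE(V) = limsup_{y ↓ 0} sup_{q ∈ ∂V(y)} |q| y / V(y)`. -/
def EAE (V : ℝ → ℝ) : EReal :=
  Filter.limsup (fun y : ℝ => ⨆ q ∈ subdiff V y, (((|q| * y / V y) : ℝ) : EReal))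
    (nhdsWithin (0 : ℝ) (Set.Ioi 0))

/-- The positive part of an extended real number, as an element of `ℝ≥0∞`. -/
def erealPos (a : EReal) : ℝ≥0∞ := if a = ⊤ then ⊤ else ENNReal.ofReal a.toReal

/-- The expectation of an `EReal`-valued function: `E[g] = E[g⁺] − E[g⁻]`, with the
convention `E[g] = −∞` whenever the negative part `g⁻` is not integrable. -/
def eexp {Ω : Type*} [MeasurableSpace Ω] (μ : Measure Ω) (g : Ω → EReal) : EReal :=
  if (∫⁻ ω, erealPos (-(g ω)) ∂μ) < ⊤ then
    ((∫⁻ ω, erealPos (g ω) ∂μ : ℝ≥0∞) : EReal) - (((∫⁻ ω, erealPos (-(g ω)) ∂μ).toReal : ℝ) : EReal)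
  else ⊥

/-- The set `C(x)` of attainable terminal liquidation values: nonnegative measurable `f`
with `E[Z f] ≤ x`. -/
def Cset {Ω : Type*} [MeasurableSpace Ω] (μ : Measure Ω) (Z : Ω → ℝ) (x : ℝ) :
    Set (Ω → ℝ) :=
  {f | Measurable f ∧ (∀ ω, 0 ≤ f ω) ∧
    (∫⁻ ω, ENNReal.ofReal (Z ω * f ω) ∂μ) ≤ ENNReal.ofReal x}

/-- The value function `u(x, W) = sup {E[W(f)] : f ∈ C(x)}`. -/
def valueFn {Ω : Type*} [MeasurableSpace Ω] (μ : Measure Ω) (Z : Ω → ℝ)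
    (W : ℝ → EReal) (x : ℝ) : EReal :=
  ⨆ f ∈ Cset μ Z x, eexp μ (fun ω => W (f ω))

end

/-- The growth condition makes `x ↦ U x - x y` bounded above, so that the real-valued supremum in
`conj` is a genuine one. -/
lemma conj_bddAbove {U : ℝ → ℝ} (hU : IsUtility U) {y : ℝ} (hy : 0 < y) :
    BddAbove ((fun x => U x - x * y) '' Ioi (0 : ℝ)) := by
  obtain ⟨B, hB⟩ := (hU.growth.eventually (gt_mem_nhds hy)).exists_forall_of_atTop
  refine ⟨max 0 (U (max B 1)), ?_⟩
  rintro _ ⟨x, hx, rfl⟩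
  have hx' : 0 < x := hx
  rcases le_total (max B 1) x with h | h
  · refine le_max_of_le_left ?_
    have := (div_lt_iff₀ hx').1 (hB x ((le_max_left _ _).trans h))
    simp only
    linarith
  · refine le_max_of_le_right ?_
    have := hU.mono hx' h
    have := mul_pos hx' hy
    simp only
    linarith

lemma le_conj {U : ℝ → ℝ} (hU : IsUtility U) {x y : ℝ} (hx : 0 < x) (hy : 0 < y) :
    U x - x * y ≤ conj U y :=
  le_csSup (conj_bddAbove hU hy) ⟨x, hx, rfl⟩

/-- The affine function `z ↦ V(y) + z y` is concave and dominates `U`, hence dominates `U_c`. -/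
lemma envelope_le {U : ℝ → ℝ} (hU : IsUtility U) {Uc : ℝ → EReal} (hUc : IsConcaveEnvelope U Uc)
    {y : ℝ} (hy : 0 < y) (z : ℝ) : Uc z ≤ ((conj U y + z * y : ℝ) : EReal) := by
  refine hUc.2.2 (fun z => ((conj U y + z * y : ℝ) : EReal)) ?_ ?_ z
  · intro a b t _ _
    rw [← EReal.coe_mul, ← EReal.coe_mul, ← EReal.coe_add, EReal.coe_le_coe_iff]
    apply le_of_eq
    ring
  · intro w
    unfold Uext
    split_ifs with h1 h2
    · have := le_conj hU h1 hy
      rw [EReal.coe_le_coe_iff]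
      linarith
    · subst h2
      refine EReal.le_of_forall_lt_iff_le.1 ?_
      intro c hc
      have hc' : conj U y + 0 * y < c := by exact_mod_cast hc
      -- a point `e` so small that `e * y` fits into the gap between `V(y)` and `c`
      set e := (c - conj U y) / y with he
      have he0 : 0 < e := div_pos (by linarith) hy
      have hey : e * y = c - conj U y := by rw [he]; field_simp
      refine (iInf_le _ (⟨e, he0⟩ : {z : ℝ // 0 < z})).trans ?_
      have := le_conj hU he0 hy
      rw [EReal.coe_le_coe_iff]
      simp only
      linarith
    · exact bot_le

/-- For small `y`, the supremum defining `V(y)` is attained at some `a > 0`; as `-a ∈ ∂V(y)`, the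
elasticity condition bounds `a * y` by a multiple of `V(y)`. -/
lemma exists_maximizers {U : ℝ → ℝ} (hU : IsUtility U) (hEAE : EAE (conj U) < ⊤) :
    ∃ M : ℝ, 1 ≤ M ∧ ∃ y₀ : ℝ, 0 < y₀ ∧ ∀ y : ℝ, 0 < y → y ≤ y₀ →
      0 < conj U y ∧ ∃ a : ℝ, 0 < a ∧ conj U y = U a - a * y ∧ a * y ≤ M * conj U y := by
  obtain ⟨m, hm, -⟩ := EReal.lt_iff_exists_real_btwn.1 hEAE
  have hev := Filter.eventually_lt_of_limsup_lt hm
  obtain ⟨y₁, hy₁, hM⟩ := mem_nhdsGT_iff_exists_Ioo_subset.1 hev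
  have hy₁' : 0 < y₁ := hy₁
  obtain ⟨p, q, hp, hq, hpq⟩ : ∃ p q : ℝ, 0 < p ∧ p < q ∧ U p < U q := by
    obtain ⟨s, t, hs, ht, hst⟩ := hU.nonconst
    rcases lt_trichotomy s t with h | h | h
    · exact ⟨s, t, hs, h, lt_of_le_of_ne (hU.mono hs h.le) hst⟩
    · exact absurd (by rw [h]) hst
    · exact ⟨t, s, ht, h, lt_of_le_of_ne (hU.mono ht h.le) hst.symm⟩
  obtain ⟨r, hr, hUr⟩ := hU.pos_limit
  have hq0 : 0 < q := hp.trans hq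
  refine ⟨max m 1, le_max_right _ _, min (y₁ / 2) (min ((U q - U p) / (2 * q)) (U r / (2 * r))),
    ?_, ?_⟩
  · refine lt_min (by linarith) (lt_min (div_pos (by linarith) (by linarith))
      (div_pos hUr (by linarith)))
  intro y hy hyle
  have h1 : y ≤ y₁ / 2 := hyle.trans (min_le_left _ _)
  have h2 : y * (2 * q) ≤ U q - U p :=
    (le_div_iff₀ (by linarith)).1 (hyle.trans ((min_le_right _ _).trans (min_le_left _ _)))
  have h3 : y * (2 * r) ≤ U r :=
    (le_div_iff₀ (by linarith)).1 (hyle.trans ((min_le_right _ _).trans (min_le_right _ _)))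
  have hV : 0 < conj U y := by
    have := le_conj hU hr hy
    nlinarith
  refine ⟨hV, ?_⟩
  obtain ⟨B, hB⟩ := (hU.growth.eventually (gt_mem_nhds hy)).exists_forall_of_atTop
  have hr0 : 0 < U r - r * y := by nlinarith
  -- the maximum over `(0,∞)` is the maximum over this compact interval
  set D := max (max B q) r with hD
  have hqD : q ≤ D := (le_max_right _ _).trans (le_max_left _ _)
  have husc : UpperSemicontinuousOn (fun x => U x - x * y) (Icc p D) := by
    have hA : UpperSemicontinuousOn U (Icc p D) :=
      hU.usc.mono (fun x hx => lt_of_lt_of_le hp hx.1)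
    have hC : UpperSemicontinuousOn (fun x : ℝ => -(x * y)) (Icc p D) :=
      ((by fun_prop : Continuous fun x : ℝ => -(x * y)).upperSemicontinuous).upperSemicontinuousOn _
    simpa [sub_eq_add_neg] using hA.add hC
  obtain ⟨a, ha, hmax⟩ := husc.exists_isMaxOn (nonempty_Icc.2 (hq.le.trans hqD)) isCompact_Icc
  have ha0 : 0 < a := lt_of_lt_of_le hp ha.1
  have hglob : ∀ x : ℝ, 0 < x → U x - x * y ≤ U a - a * y := by
    intro x hx
    have hqa : U q - q * y ≤ U a - a * y := hmax ⟨hq.le, hqD⟩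
    rcases lt_or_ge x p with h | h
    · have := hU.mono hx h.le
      have := mul_pos hx hy
      have := mul_pos hq0 hy
      nlinarith
    · rcases le_or_gt x D with h' | h'
      · exact hmax ⟨h, h'⟩
      · have hxB := hB x (((le_max_left _ _).trans (le_max_left _ _)).trans h'.le)
        have := (div_lt_iff₀ hx).1 hxB
        rcases lt_or_ge r p with hrp | hrp
        · have := hU.mono hr hrp.le
          nlinarith [mul_pos hr hy, mul_pos hq0 hy]
        · have hra : U r - r * y ≤ U a - a * y := hmax ⟨hrp, le_max_right _ _⟩
          nlinarith
  have hVa : conj U y = U a - a * y := by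
    refine le_antisymm (csSup_le ⟨_, q, hq0, rfl⟩ ?_) (le_conj hU ha0 hy)
    rintro _ ⟨x, hx, rfl⟩
    exact hglob x hx
  refine ⟨a, ha0, hVa, ?_⟩
  have hsub : -a ∈ subdiff (conj U) y := by
    intro w hw
    have := le_conj hU ha0 hw
    rw [hVa]
    linarith
  have hlt : (⨆ q ∈ subdiff (conj U) y, (((|q| * y / conj U y) : ℝ) : EReal)) < m :=
    hM ⟨hy, by linarith⟩
  have hle : (((|(-a)| * y / conj U y) : ℝ) : EReal) < m :=
    lt_of_le_of_lt (le_iSup₂ (f := fun q (_ : q ∈ subdiff (conj U) y) =>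
      (((|q| * y / conj U y) : ℝ) : EReal)) (-a) hsub) hlt
  rw [EReal.coe_lt_coe_iff, abs_neg, abs_of_pos ha0, div_lt_iff₀ hV] at hle
  nlinarith [le_max_left m 1]

/-- The concave envelope is bounded on bounded sets and, under finite asymptotic elasticity,
dominated by a multiple of `U` for large arguments. -/
lemma envelope_bound {U : ℝ → ℝ} (hU : IsUtility U) {Uc : ℝ → EReal}
    (hUc : IsConcaveEnvelope U Uc) (hEAE : EAE (conj U) < ⊤) :
    ∃ C K b : ℝ, 0 ≤ C ∧ 0 ≤ K ∧ 0 < b ∧ (∀ z, z ≤ b → Uc z ≤ (C : EReal)) ∧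
      ∀ z, b ≤ z → 0 ≤ U z ∧ Uc z ≤ ((K * U z : ℝ) : EReal) := by
  obtain ⟨M, hM1, y₀, hy₀, hmax⟩ := exists_maximizers hU hEAE
  -- the ratio is chosen so that `M * (1 / ρ - 1) = 1 / 2`
  set ρ : ℝ := 2 * M / (2 * M + 1) with hρ
  have hρ0 : 0 < ρ := by positivity
  have hρ1 : ρ < 1 := by rw [hρ, div_lt_one (by linarith)]; linarith
  have hρM : ρ * (2 * M + 1) = 2 * M := by rw [hρ]; field_simp
  set y : ℕ → ℝ := fun n => y₀ * ρ ^ n with hydef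
  have hy : ∀ n, 0 < y n := fun n => by positivity
  have hyle : ∀ n, y n ≤ y₀ := fun n =>
    mul_le_of_le_one_right hy₀.le (pow_le_one₀ hρ0.le hρ1.le)
  have hys : ∀ n, y (n + 1) = ρ * y n := fun n => by simp only [hydef, pow_succ]; ring
  have hlim : Tendsto y atTop (𝓝 0) := by
    simpa using (tendsto_pow_atTop_nhds_zero_of_lt_one hρ0.le hρ1).const_mul y₀
  choose hVpos a ha hVa haM using fun n => hmax (y n) (hy n) (hyle n)
  have hVle : ∀ n z, a n ≤ z → conj U (y n) ≤ U z := by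
    intro n z hz
    have := hU.mono (ha n) hz
    have := mul_pos (ha n) (hy n)
    rw [hVa n]
    linarith
  refine ⟨conj U (y 0) + a 0 * y 0, 2 * (1 + M), a 0, ?_, by linarith, ha 0, ?_, ?_⟩
  · have := hVpos 0
    have := mul_pos (ha 0) (hy 0)
    linarith
  · intro z hz
    refine (envelope_le hU hUc (hy 0) z).trans ?_
    rw [EReal.coe_le_coe_iff]
    have := mul_le_mul_of_nonneg_right hz (hy 0).le
    linarith
  intro z hz
  have hz0 : 0 < z := (ha 0).trans_le hz
  have hUz : 0 < U z := (hVpos 0).trans_le (hVle 0 z hz)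
  refine ⟨hUz.le, ?_⟩
  by_cases hall : ∀ n, a n ≤ z
  · have hlim' : Tendsto (fun n => ((U z + z * y n : ℝ) : EReal)) atTop (𝓝 ((U z : ℝ) : EReal)) := by
      refine (continuous_coe_real_ereal.tendsto _).comp ?_
      simpa using (hlim.const_mul z).const_add (U z)
    have : Uc z ≤ ((U z : ℝ) : EReal) := by
      refine ge_of_tendsto' hlim' fun n => (envelope_le hU hUc (hy n) z).trans ?_
      rw [EReal.coe_le_coe_iff]
      linarith [hVle n z (hall n)]
    refine this.trans ?_
    rw [EReal.coe_le_coe_iff]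
    nlinarith
  · have hex : ∃ n, z < a n := by
      by_contra! h
      exact hall h
    obtain ⟨n, hn1, hn2⟩ : ∃ n, a n ≤ z ∧ z < a (n + 1) := by
      classical
      have hne : Nat.find hex ≠ 0 := fun h0 => by
        have := Nat.find_spec hex
        rw [h0] at this
        linarith
      obtain ⟨k, hk⟩ := Nat.exists_eq_succ_of_ne_zero hne
      refine ⟨k, not_lt.1 (Nat.find_min hex (by omega)), ?_⟩
      have := Nat.find_spec hex
      rwa [hk] at this
    refine (envelope_le hU hUc (hy (n + 1)) z).trans ?_
    rw [EReal.coe_le_coe_iff]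
    have hVn := hVle n z hn1
    have hbnd := haM (n + 1)
    have hVp := hVpos (n + 1)
    -- comparison of consecutive values through the maximizer at the smaller argument
    have hstep : conj U (y (n + 1)) ≤ 2 * conj U (y n) := by
      have hc := le_conj hU (ha (n + 1)) (hy n)
      have he := hVa (n + 1)
      have hgap : 2 * M * (y n - y (n + 1)) = y (n + 1) := by
        rw [hys]
        linear_combination y n * (-hρM)
      have hag : 2 * M * (a (n + 1) * (y n - y (n + 1))) ≤ M * conj U (y (n + 1)) := by
        calc _ = a (n + 1) * (2 * M * (y n - y (n + 1))) := by ring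
          _ ≤ _ := by rw [hgap]; exact hbnd
      have hM0 : 0 < M := by linarith
      have : 2 * (a (n + 1) * (y n - y (n + 1))) ≤ conj U (y (n + 1)) := by
        refine le_of_mul_le_mul_left ?_ hM0
        linarith
      nlinarith
    have hzy : z * y (n + 1) ≤ a (n + 1) * y (n + 1) :=
      mul_le_mul_of_nonneg_right hn2.le (hy (n + 1)).le
    nlinarith

lemma erealPos_coe (r : ℝ) : erealPos (r : EReal) = ENNReal.ofReal r := by
  simp [erealPos]

lemma erealPos_le_of_le_coe {e : EReal} {r : ℝ} (h : e ≤ (r : EReal)) :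
    erealPos e ≤ ENNReal.ofReal r := by
  induction e with
  | bot => simp [erealPos]
  | coe s => rw [erealPos_coe]; exact ENNReal.ofReal_le_ofReal (by exact_mod_cast h)
  | top => simp at h

lemma eexp_le_lintegral {Ω : Type*} [MeasurableSpace Ω] (μ : Measure Ω) (g : Ω → EReal) :
    eexp μ g ≤ ((∫⁻ ω, erealPos (g ω) ∂μ : ℝ≥0∞) : EReal) := by
  unfold eexp
  split_ifs
  · have := EReal.sub_le_sub (le_refl ((∫⁻ ω, erealPos (g ω) ∂μ : ℝ≥0∞) : EReal))
      (EReal.coe_nonneg.2 (ENNReal.toReal_nonneg (a := ∫⁻ ω, erealPos (-(g ω)) ∂μ)))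
    simpa only [sub_zero] using this
  · exact bot_le

/-- If `E[g] ≤ r` and the integral of the negative part is at most `c`, then the integral of the
positive part is at most `r + c`. -/
lemma lintegral_pos_le_of_eexp_le {Ω : Type*} [MeasurableSpace Ω] (μ : Measure Ω) (g : Ω → EReal)
    {r c : ℝ} (hc : 0 ≤ c) (hneg : ∫⁻ ω, erealPos (-(g ω)) ∂μ ≤ ENNReal.ofReal c)
    (h : eexp μ g ≤ (r : EReal)) :
    ∫⁻ ω, erealPos (g ω) ∂μ ≤ ENNReal.ofReal (r + c) := by
  unfold eexp at h
  rw [if_pos (hneg.trans_lt ENNReal.ofReal_lt_top)] at h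
  have hN : (∫⁻ ω, erealPos (-(g ω)) ∂μ).toReal ≤ c := ENNReal.toReal_le_of_le_ofReal hc hneg
  generalize (∫⁻ ω, erealPos (-(g ω)) ∂μ).toReal = N at h hN
  generalize (∫⁻ ω, erealPos (g ω) ∂μ) = P at h ⊢
  induction P with
  | top => simp at h
  | coe p =>
    have h' : (p : ℝ) - N ≤ r := by
      rw [← EReal.coe_le_coe_iff, EReal.coe_sub]
      exact h
    rw [← ENNReal.ofReal_coe_nnreal]
    exact ENNReal.ofReal_le_ofReal (by linarith)

/-- Under `EAE(V) < ∞`: if `u(x, U) < ∞` for some `x > 0`, then `u(x', U_c) < ∞`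
for every `x' ∈ (0, x)`. -/
theorem value_concave_envelope_finite
    {Ω : Type*} [MeasurableSpace Ω] (μ : MeasureTheory.Measure Ω)
    [MeasureTheory.IsProbabilityMeasure μ]
    (Z : Ω → ℝ) (hZmeas : Measurable Z) (hZpos : ∀ ω, 0 < Z ω)
    (hZint : MeasureTheory.Integrable Z μ) (hZexp : ∫ ω, Z ω ∂μ = 1)
    (U : ℝ → ℝ) (hU : IsUtility U) (Uc : ℝ → EReal) (hUc : IsConcaveEnvelope U Uc)
    (hEAE : EAE (conj U) < ⊤)
    (x : ℝ) (hx : 0 < x) (hfin : valueFn μ Z (Uext U) x < ⊤) :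
    ∀ x' : ℝ, 0 < x' → x' < x → valueFn μ Z Uc x' < ⊤ := by
  intro x' hx' hxx
  obtain ⟨C, K, b, hC, hK, hb, hsmall, hlarge⟩ := envelope_bound hU hUc hEAE
  obtain ⟨r, hr, -⟩ := EReal.lt_iff_exists_real_btwn.1 hfin
  set d := x - x' with hd
  have hd0 : 0 < d := by linarith
  set B : ℝ≥0∞ := ENNReal.ofReal C + ENNReal.ofReal K * ENNReal.ofReal (r + |U d|) with hB
  have hBtop : B < ⊤ := ENNReal.add_lt_top.2
    ⟨ENNReal.ofReal_lt_top, ENNReal.mul_lt_top ENNReal.ofReal_lt_top ENNReal.ofReal_lt_top⟩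
  suffices h : valueFn μ Z Uc x' ≤ (B : EReal) by
    refine h.trans_lt ?_
    rw [lt_top_iff_ne_top]
    simpa using hBtop.ne
  refine iSup₂_le fun f hf => ?_
  obtain ⟨hfm, hf0, hfx⟩ := hf
  refine (eexp_le_lintegral μ _).trans (EReal.coe_ennreal_le_coe_ennreal_iff.2 ?_)
  -- shifting by `d = x - x'` keeps the payoff attainable and bounds its utility from below
  have hZ1 : ∫⁻ ω, ENNReal.ofReal (Z ω) ∂μ = 1 := by
    rw [← ofReal_integral_eq_lintegral_ofReal hZint (ae_of_all _ fun ω => (hZpos ω).le), hZexp,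
      ENNReal.ofReal_one]
  have hg : (fun ω => f ω + d) ∈ Cset μ Z x := by
    refine ⟨hfm.add_const d, fun ω => add_nonneg (hf0 ω) hd0.le, ?_⟩
    have : ∀ ω, ENNReal.ofReal (Z ω * (f ω + d)) =
        ENNReal.ofReal (Z ω * f ω) + ENNReal.ofReal d * ENNReal.ofReal (Z ω) := fun ω => by
      rw [← ENNReal.ofReal_mul hd0.le, ← ENNReal.ofReal_add
        (mul_nonneg (hZpos ω).le (hf0 ω)) (mul_nonneg hd0.le (hZpos ω).le)]
      congr 1
      ring
    simp_rw [this]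
    rw [lintegral_add_left (by fun_prop : Measurable fun ω => ENNReal.ofReal (Z ω * f ω)),
      lintegral_const_mul' _ _ ENNReal.ofReal_ne_top, hZ1, mul_one]
    calc _ ≤ ENNReal.ofReal x' + ENNReal.ofReal d := by gcongr
      _ = ENNReal.ofReal x := by rw [← ENNReal.ofReal_add hx'.le hd0.le, hd]; congr 1; ring
  have hgU : ∀ ω, Uext U (f ω + d) = ((U (f ω + d) : ℝ) : EReal) := fun ω =>
    if_pos (add_pos_of_nonneg_of_pos (hf0 ω) hd0)
  have hle : eexp μ (fun ω => Uext U (f ω + d)) ≤ (r : EReal) :=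
    (le_iSup₂ (f := fun f (_ : f ∈ Cset μ Z x) => eexp μ (fun ω => Uext U (f ω))) _ hg).trans hr.le
  have hP : ∫⁻ ω, ENNReal.ofReal (U (f ω + d)) ∂μ ≤ ENNReal.ofReal (r + |U d|) := by
    have := lintegral_pos_le_of_eexp_le μ _ (abs_nonneg (U d)) ?_ hle
    · simpa only [hgU, erealPos_coe] using this
    · calc ∫⁻ ω, erealPos (-(Uext U (f ω + d))) ∂μ ≤ ∫⁻ _, ENNReal.ofReal |U d| ∂μ := by
            refine lintegral_mono fun ω => ?_
            simp only [hgU]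
            rw [← EReal.coe_neg, erealPos_coe]
            refine ENNReal.ofReal_le_ofReal ?_
            have := hU.mono hd0 (le_add_of_nonneg_left (hf0 ω))
            linarith [neg_abs_le (U d)]
        _ = _ := by simp
  calc ∫⁻ ω, erealPos (Uc (f ω)) ∂μ
      ≤ ∫⁻ ω, (ENNReal.ofReal C + ENNReal.ofReal K * ENNReal.ofReal (U (f ω + d))) ∂μ := by
        refine lintegral_mono fun ω => ?_
        rcases le_total (f ω) b with h | h
        · exact (erealPos_le_of_le_coe (hsmall _ h)).trans le_self_add
        · obtain ⟨-, h2⟩ := hlarge _ h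
          refine (erealPos_le_of_le_coe h2).trans (le_add_left ?_)
          rw [ENNReal.ofReal_mul hK]
          gcongr
          exact hU.mono (hb.trans_le h) (by linarith)
    _ = ENNReal.ofReal C + ENNReal.ofReal K * ∫⁻ ω, ENNReal.ofReal (U (f ω + d)) ∂μ := by
        rw [lintegral_add_left measurable_const, lintegral_const_mul' _ _ ENNReal.ofReal_ne_top]
        simp
    _ ≤ B := by rw [hB]; gcongr
end

section
/- Suppose E[V(y Z)] < ∞ for every y > 0, where V is the convex conjugate of the utility function U. For n ∈ ℕ let 𝒞ₙ := {f : Ω → ℝ measurable : 0 ≤ f ≤ n} and Vₙ(y) := sup_{0 ≤ x ≤ n}(U(x) − x y). Then for every y > 0 and every n ∈ ℕ, sup_{f ∈ 𝒞ₙ} E[U(f) − f y Z] = E[Vₙ(y Z)]. -/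
/-!
The inequality `≤` holds pointwise: if `0 ≤ f ≤ n`, then `U(f) − f y Z ≤ Vₙ(y Z)`, and `eexp` is
monotone (`eexp_mono`).

For `≥`, the case `n = 0` is trivial, since `f = 0` is the only competitor. If `n ≥ 1`, then
`U(n) − n t ≤ Vₙ(t) ≤ U(n)`, so `Vₙ(y Z)` is real-valued and integrable. As `U` is nondecreasing, a
near-maximiser `x` of `U(x) − x t` on `[0,n]` can be moved slightly to the right to a rational
point of `(0,n]` (`exists_rat_near_max`). Choosing the first near-optimal rational in an
enumeration of `ℚ` gives a measurable `f` with `U(f) − f y Z > Vₙ(y Z) − ε` everywhere, without any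
measurable selection theorem. Integrating and letting `ε → 0` gives the claim.
-/

open MeasureTheory Filter Set Topology ENNReal

noncomputable section

/-- The ball of radius `n` in the positive orthant of `L⁰`. -/
def Cball {Ω : Type*} [MeasurableSpace Ω] (n : ℕ) : Set (Ω → ℝ) :=
  {f | Measurable f ∧ ∀ ω, 0 ≤ f ω ∧ f ω ≤ (n : ℝ)}

/-- The truncated conjugate `Vₙ(y) = sup_{0 ≤ x ≤ n} (U(x) − x y)`. -/
def Vtrunc (U : ℝ → ℝ) (n : ℕ) (y : ℝ) : EReal :=
  ⨆ x : {x : ℝ // x ∈ Set.Icc (0 : ℝ) (n : ℝ)}, (Uext U x.1 - (((x.1 * y) : ℝ) : EReal))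

theorem erealPos_mono : Monotone erealPos := by
  intro a b h
  unfold erealPos
  by_cases hb : b = ⊤
  · simp [hb]
  have ha : a ≠ ⊤ := fun h' => hb (top_le_iff.1 (h' ▸ h))
  rw [if_neg ha, if_neg hb]
  by_cases ha' : a = ⊥
  · simp [ha']
  exact ENNReal.ofReal_le_ofReal (EReal.toReal_le_toReal h ha' hb)

theorem eexp_mono {Ω : Type*} [MeasurableSpace Ω] (μ : Measure Ω) {g h : Ω → EReal}
    (hgh : ∀ ω, g ω ≤ h ω) : eexp μ g ≤ eexp μ h := by
  have hneg : (∫⁻ ω, erealPos (-(h ω)) ∂μ) ≤ ∫⁻ ω, erealPos (-(g ω)) ∂μ :=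
    lintegral_mono fun ω => erealPos_mono (EReal.neg_le_neg_iff.2 (hgh ω))
  have hpos : (∫⁻ ω, erealPos (g ω) ∂μ) ≤ ∫⁻ ω, erealPos (h ω) ∂μ :=
    lintegral_mono fun ω => erealPos_mono (hgh ω)
  unfold eexp
  by_cases hg : (∫⁻ ω, erealPos (-(g ω)) ∂μ) < ⊤
  · rw [if_pos hg, if_pos (hneg.trans_lt hg)]
    exact EReal.sub_le_sub (EReal.coe_ennreal_le_coe_ennreal_iff.2 hpos)
      (EReal.coe_le_coe_iff.2 (ENNReal.toReal_mono hg.ne hneg))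
  · rw [if_neg hg]
    exact bot_le

theorem eexp_coe {Ω : Type*} [MeasurableSpace Ω] (μ : Measure Ω) {v : Ω → ℝ}
    (hv : Integrable v μ) : eexp μ (fun ω => (v ω : EReal)) = ((∫ ω, v ω ∂μ : ℝ) : EReal) := by
  have e1 : ∀ r : ℝ, erealPos (r : EReal) = ENNReal.ofReal r := fun r => by simp [erealPos]
  have e2 : ∀ r : ℝ, erealPos (-(r : EReal)) = ENNReal.ofReal (-r) := fun r => by
    rw [← EReal.coe_neg, e1]
  have hp : (∫⁻ ω, ENNReal.ofReal (v ω) ∂μ) ≠ ⊤ := hv.lintegral_lt_top.ne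
  have hn : (∫⁻ ω, ENNReal.ofReal (-v ω) ∂μ) < ⊤ := hv.neg.lintegral_lt_top
  unfold eexp
  simp only [e1, e2]
  rw [if_pos hn, integral_eq_lintegral_pos_part_sub_lintegral_neg_part hv, EReal.coe_sub,
    EReal.coe_ennreal_toReal hp]

theorem Uext_le {U : ℝ → ℝ} (hU : IsUtility U) {x r : ℝ} (hr : 0 < r) (hxr : x ≤ r) :
    Uext U x ≤ (U r : EReal) := by
  unfold Uext
  split_ifs with h1 h2
  · exact EReal.coe_le_coe_iff.2 (hU.mono h1 hxr)
  · exact iInf_le (fun z : {z : ℝ // 0 < z} => ((U z.1 : ℝ) : EReal)) ⟨r, hr⟩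
  · exact bot_le

theorem Vtrunc_antitone (U : ℝ → ℝ) (n : ℕ) : Antitone (Vtrunc U n) := by
  intro s t hst
  refine iSup_mono fun x => EReal.sub_le_sub le_rfl (EReal.coe_le_coe_iff.2 ?_)
  exact mul_le_mul_of_nonneg_left hst x.2.1

theorem Uext_sub_le_Vtrunc (U : ℝ → ℝ) {n : ℕ} {x : ℝ} (h0 : 0 ≤ x) (hn : x ≤ n) (t : ℝ) :
    Uext U x - ((x * t : ℝ) : EReal) ≤ Vtrunc U n t :=
  le_iSup (fun x : {x : ℝ // x ∈ Set.Icc (0 : ℝ) (n : ℝ)} =>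
    (Uext U x.1 - (((x.1 * t) : ℝ) : EReal))) ⟨x, h0, hn⟩

theorem Vtrunc_le {U : ℝ → ℝ} (hU : IsUtility U) {n : ℕ} (hn : 0 < n) {t : ℝ} (ht : 0 ≤ t) :
    Vtrunc U n t ≤ (U n : EReal) := by
  refine iSup_le fun x => ?_
  calc Uext U x.1 - ((x.1 * t : ℝ) : EReal) ≤ (U n : EReal) - ((0 : ℝ) : EReal) :=
        EReal.sub_le_sub (Uext_le hU (Nat.cast_pos.2 hn) x.2.2)
          (EReal.coe_le_coe_iff.2 (mul_nonneg x.2.1 ht))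
    _ = (U n : EReal) := by simp

theorem le_Vtrunc (U : ℝ → ℝ) {n : ℕ} (hn : 0 < n) (t : ℝ) :
    ((U n - n * t : ℝ) : EReal) ≤ Vtrunc U n t := by
  have hn' : (0 : ℝ) < n := Nat.cast_pos.2 hn
  have h := Uext_sub_le_Vtrunc U hn'.le le_rfl t
  rwa [Uext, if_pos hn', ← EReal.coe_sub] at h

theorem coe_toReal_Vtrunc {U : ℝ → ℝ} (hU : IsUtility U) {n : ℕ} (hn : 0 < n) {t : ℝ}
    (ht : 0 ≤ t) : ((Vtrunc U n t).toReal : EReal) = Vtrunc U n t :=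
  EReal.coe_toReal ((Vtrunc_le hU hn ht).trans_lt (EReal.coe_lt_top _)).ne
    ((EReal.bot_lt_coe _).trans_le (le_Vtrunc U hn t)).ne'

/-- The supremum defining `Vₙ(t)` may be taken over the rational points of `(0,n]`: since `U` is
nondecreasing, moving a point slightly to the right costs only the small increase of `x t`. -/
theorem exists_rat_near_max {U : ℝ → ℝ} (hU : IsUtility U) {n : ℕ} (hn : 0 < n) {t a : ℝ}
    (ht : 0 < t) (ha : (a : EReal) < Vtrunc U n t) :
    ∃ r : ℚ, 0 < (r : ℝ) ∧ (r : ℝ) ≤ n ∧ a < U r - r * t := by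
  obtain ⟨⟨x, hx0, hxn⟩, hx⟩ := lt_iSup_iff.1 ha
  have hn' : (0 : ℝ) < n := Nat.cast_pos.2 hn
  have hle := fun (r : ℝ) (hr : 0 < r) (hxr : x ≤ r) => Uext_le hU hr hxr
  dsimp only at hx
  -- `U(x)` is finite, which matters only at `x = 0`.
  generalize Uext U x = c at hx hle
  induction c with
  | bot => simp at hx
  | top => exact absurd (hle n hn' hxn) (by simp)
  | coe c =>
    simp only [EReal.coe_le_coe_iff] at hle
    rw [← EReal.coe_sub, EReal.coe_lt_coe_iff] at hx
    rcases hxn.eq_or_lt with h | h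
    · refine ⟨n, by simpa using hn', by simp, ?_⟩
      have := hle n hn' hxn
      simp only [Rat.cast_natCast]
      rw [h] at hx
      linarith
    · have hd : 0 < (c - x * t - a) / t := div_pos (by linarith) ht
      obtain ⟨r, hr1, hr2⟩ := exists_rat_btwn (lt_min h (lt_add_of_pos_right x hd))
      have h1 := hr2.trans_le (min_le_left _ _)
      have h2 : (r : ℝ) - x < (c - x * t - a) / t := by
        have := hr2.trans_le (min_le_right _ _)
        linarith
      rw [lt_div_iff₀ ht] at h2
      have h3 := hle r (hx0.trans_lt hr1) hr1.le
      exact ⟨r, hx0.trans_lt hr1, h1.le, by linarith⟩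

/-- For each `n` and each `y > 0`, `sup_{f ∈ 𝒞ₙ} E[U(f) − f y Z] = E[Vₙ(y Z)]`. -/
theorem sup_over_ball_eq_expectation_truncated_conjugate
    {Ω : Type*} [MeasurableSpace Ω] (μ : MeasureTheory.Measure Ω)
    [MeasureTheory.IsProbabilityMeasure μ]
    (Z : Ω → ℝ) (hZmeas : Measurable Z) (hZpos : ∀ ω, 0 < Z ω)
    (hZint : MeasureTheory.Integrable Z μ) (hZexp : ∫ ω, Z ω ∂μ = 1)
    (U : ℝ → ℝ) (hU : IsUtility U)
    (hV : ∀ y : ℝ, 0 < y → eexp μ (fun ω => ((conj U (y * Z ω) : ℝ) : EReal)) < ⊤)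
    (y : ℝ) (hy : 0 < y) (n : ℕ) :
    (⨆ f ∈ (Cball n : Set (Ω → ℝ)),
        eexp μ (fun ω => Uext U (f ω) - (((f ω * (y * Z ω)) : ℝ) : EReal))) =
      eexp μ (fun ω => Vtrunc U n (y * Z ω)) := by
  have hTpos : ∀ ω, 0 < y * Z ω := fun ω => mul_pos hy (hZpos ω)
  have hTmeas : Measurable fun ω => y * Z ω := hZmeas.const_mul y
  apply le_antisymm
  · exact iSup₂_le fun f hf =>
      eexp_mono μ fun ω => Uext_sub_le_Vtrunc U (hf.2 ω).1 (hf.2 ω).2 _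
  rcases Nat.eq_zero_or_pos n with rfl | hn
  · refine le_iSup₂_of_le (fun _ => 0) ⟨measurable_const, fun ω => by simp⟩ ?_
    refine eexp_mono μ fun ω => iSup_le fun x => ?_
    have hx : x.1 = 0 := le_antisymm (by simpa using x.2.2) x.2.1
    rw [hx]
  set v : Ω → ℝ := fun ω => (Vtrunc U n (y * Z ω)).toReal with hv
  have hvV : ∀ ω, (v ω : EReal) = Vtrunc U n (y * Z ω) := fun ω =>
    coe_toReal_Vtrunc hU hn (hTpos ω).le
  have hvmeas : Measurable v :=
    ((Vtrunc_antitone U n).measurable.comp hTmeas).ereal_toReal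
  have hvint : Integrable v μ := by
    refine integrable_of_le_of_le hvmeas.aestronglyMeasurable (ae_of_all _ fun ω => ?_)
      (ae_of_all _ fun ω => ?_) ((integrable_const (U n)).sub ((hZint.const_mul y).const_mul (n : ℝ)))
      (integrable_const (U n))
    · have := le_Vtrunc U hn (y * Z ω)
      rw [← hvV] at this
      exact EReal.coe_le_coe_iff.1 this
    · have := Vtrunc_le hU hn (hTpos ω).le
      rw [← hvV] at this
      exact EReal.coe_le_coe_iff.1 this
  simp only [← hvV]
  rw [eexp_coe μ hvint]
  refine EReal.ge_of_forall_gt_iff_ge.1 fun z hz => ?_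
  rw [EReal.coe_lt_coe_iff] at hz
  set ε : ℝ := (∫ ω, v ω ∂μ) - z with hε
  have hε0 : 0 < ε := sub_pos.2 hz
  obtain ⟨q, hq⟩ := exists_surjective_nat ℚ
  let p : Ω → ℕ → Prop := fun ω k =>
    0 < (q k : ℝ) ∧ (q k : ℝ) ≤ n ∧ v ω - ε < U (q k) - q k * (y * Z ω)
  have hp : ∀ ω, ∃ k, p ω k := fun ω => by
    obtain ⟨r, hr⟩ := exists_rat_near_max hU hn (a := v ω - ε) (hTpos ω)
      (by rw [← hvV, EReal.coe_lt_coe_iff]; linarith)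
    obtain ⟨k, rfl⟩ := hq r
    exact ⟨k, hr⟩
  classical
  have hNmeas : Measurable fun ω => Nat.find (hp ω) := by
    refine measurable_find hp fun k => ?_
    exact (MeasurableSet.const _).inter ((MeasurableSet.const _).inter
      (measurableSet_lt (hvmeas.sub_const ε) ((hTmeas.const_mul _).const_sub _)))
  have hN := fun ω => Nat.find_spec (hp ω)
  set N : Ω → ℕ := fun ω => Nat.find (hp ω) with hNdef
  let f : Ω → ℝ := fun ω => (q (N ω) : ℝ)
  have hfmeas : Measurable f := (measurable_of_countable fun k => (q k : ℝ)).comp hNmeas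
  have hUf : Measurable fun ω => U (f ω) :=
    (measurable_of_countable fun k => U (q k)).comp hNmeas
  have hf : f ∈ (Cball n : Set (Ω → ℝ)) := ⟨hfmeas, fun ω => ⟨(hN ω).1.le, (hN ω).2.1⟩⟩
  set u : Ω → ℝ := fun ω => U (f ω) - f ω * (y * Z ω) with hu
  have huU : ∀ ω, Uext U (f ω) - ((f ω * (y * Z ω) : ℝ) : EReal) = (u ω : EReal) := fun ω => by
    rw [Uext, if_pos (hN ω).1, ← EReal.coe_sub]
  have huv : ∀ ω, u ω ≤ v ω := fun ω => by
    have := Uext_sub_le_Vtrunc U (hf.2 ω).1 (hf.2 ω).2 (y * Z ω)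
    rw [huU, ← hvV] at this
    exact EReal.coe_le_coe_iff.1 this
  have hvu : ∀ ω, v ω - ε ≤ u ω := fun ω => (hN ω).2.2.le
  have hvε : Integrable (fun ω => v ω - ε) μ := hvint.sub (integrable_const ε)
  have huint : Integrable u μ :=
    integrable_of_le_of_le (hUf.sub (hfmeas.mul hTmeas)).aestronglyMeasurable
      (ae_of_all _ hvu) (ae_of_all _ huv) hvε hvint
  refine le_iSup₂_of_le f hf ?_
  simp only [huU]
  rw [eexp_coe μ huint, EReal.coe_le_coe_iff]
  have hle := integral_mono hvε huint hvu
  rw [integral_sub hvint (integrable_const ε)] at hle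
  simp only [integral_const, probReal_univ, one_smul] at hle
  linarith

end
end
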